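/- Let q : F_∞ → S_k be a group homomorphism, τ_q the associated permutational trace on F_∞ (τ_q(g) = τ_k(q(g))), and a ∈ M_n(ℚ̄F_∞). Then for every field embedding j : ℚ̄ → ℂ, dim_{τ_q}(ker j(a)) = (1/k)·dim_{ℚ̄} ker((α_k∘q)(a)), where (α_k∘q)(a) ∈ M_{kn}(ℚ̄) is obtained by applying q and the permutation-matrix representation α_k to each entry of a. In particular dim_{τ_q}(ker j(a)) does not depend on the embedding j. -/

import Mathlib

open scoped ComplexOrder ENNReal
open Filter Topology Matrix

set_option synthInstance.maxHeartbeats 1000000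
set_option maxHeartbeats 1000000

noncomputable section

instance piLpCompleteSpace {ι : Type*} [Fintype ι] (p : ℝ≥0∞) (β : ι → Type*)
    [∀ i, UniformSpace (β i)] [∀ i, CompleteSpace (β i)] : CompleteSpace (PiLp p β) :=
  PiLp.completeSpace p β

/-- `φ : G → ℂ` is of positive type: for every finite family `g₁, …, g_m` of elements of
`G`, the matrix `(φ (gᵢ⁻¹ gⱼ))_{i,j}` is positive semidefinite. -/
def IsPosType {G : Type*} [Group G] (φ : G → ℂ) : Prop :=
  ∀ (m : ℕ) (g : Fin m → G), (Matrix.of fun i j => φ ((g i)⁻¹ * g j)).PosSemidef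

/-- A trace on a (discrete) group: a function of positive type, constant on conjugacy
classes. -/
def IsGroupTrace {G : Type*} [Group G] (φ : G → ℂ) : Prop :=
  IsPosType φ ∧ ∀ g h : G, φ (h * g * h⁻¹) = φ g

/-- GNS representation data for a function `φ` on a group `G`: a Hilbert space `H`, a
unital algebra morphism `π` from `ℂG = MonoidAlgebra ℂ G` to the bounded operators on `H`
sending group elements to unitaries (this is the condition `star_of`), and a cyclic vector
`ξ` whose matrix coefficient is (the linear extension of) `φ`. -/
structure GNSRep (G : Type*) [Group G] (φ : G → ℂ) where
  H : Type
  [instNormed : NormedAddCommGroup H]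
  [instInner : InnerProductSpace ℂ H]
  [instComplete : CompleteSpace H]
  π : MonoidAlgebra ℂ G →ₐ[ℂ] (H →L[ℂ] H)
  ξ : H
  star_of : ∀ g : G, star (π (MonoidAlgebra.of ℂ G g)) = π (MonoidAlgebra.of ℂ G g⁻¹)
  inner_eq : ∀ g : G, (inner ℂ ξ (π (MonoidAlgebra.of ℂ G g) ξ) : ℂ) = φ g
  cyclic : Dense (Set.range fun x : MonoidAlgebra ℂ G => π x ξ)

attribute [instance] GNSRep.instNormed GNSRep.instInner GNSRep.instComplete

/-- The vector `ξᵢ ∈ Hⁿ`: the cyclic vector `ξ` in the `i`-th summand, `0` elsewhere. -/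
def GNSRep.vec {G : Type*} [Group G] {φ : G → ℂ} (R : GNSRep G φ) {n : ℕ} (i : Fin n) :
    PiLp 2 (fun _ : Fin n => R.H) :=
  (PiLp.continuousLinearEquiv 2 ℂ (fun _ : Fin n => R.H)).symm (Pi.single i R.ξ)

/-- `|x| = (x* x)^{1/2}`, via the continuous functional calculus. -/
def cfcAbs {A : Type*} [CStarAlgebra A] (x : A) : A := cfc Real.sqrt (star x * x)

/-- The set of continuous majorants of `ln₊` on `[0,∞)`.  (Recall that `Real.log 0 = 0`,
so that `Real.log` agrees with `ln₊` on `[0,∞)`.) -/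
def lnPlusMajorants : Set (ℝ → ℝ) :=
  {g | ContinuousOn g (Set.Ici 0) ∧ ∀ t ∈ Set.Ici (0:ℝ), Real.log t ≤ g t}

/-- The action of a matrix `a ∈ Mₙ(R)` on the Hilbert space `H'ⁿ` (with its `ℓ²` inner
product) induced by a morphism `π : R → B(H')`: `(π_n(a) v)_i = Σ_j π(a i j) (v j)`. -/
def matAct {R H' : Type*} [Ring R] [Algebra ℂ R] [NormedAddCommGroup H']
    [InnerProductSpace ℂ H'] {n : ℕ}
    (π : R →ₐ[ℂ] (H' →L[ℂ] H')) (a : Matrix (Fin n) (Fin n) R) :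
    PiLp 2 (fun _ : Fin n => H') →L[ℂ] PiLp 2 (fun _ : Fin n => H') :=
  (PiLp.continuousLinearEquiv 2 ℂ _).symm.toContinuousLinearMap ∘L
    (ContinuousLinearMap.pi fun i => ∑ j, (π (a i j)).comp (ContinuousLinearMap.proj j)) ∘L
    (PiLp.continuousLinearEquiv 2 ℂ _).toContinuousLinearMap

/-- `(φ ⊗ Trₙ)(ln₊ |a|) := inf { Σᵢ ⟨ξᵢ, g(|π(a)|) ξᵢ⟩ : g : [0,∞) → ℝ continuous, g ≥ ln₊ }`,
an element of `ℝ ∪ {−∞}`, computed in the GNS representation `R`. -/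
def GNSRep.lnPlusQ {G : Type*} [Group G] {φ : G → ℂ} (R : GNSRep G φ) {n : ℕ}
    (a : Matrix (Fin n) (Fin n) (MonoidAlgebra ℂ G)) : EReal :=
  ⨅ g ∈ lnPlusMajorants,
    ((∑ i, (inner ℂ (R.vec i) (cfc g (cfcAbs (matAct R.π a)) (R.vec i)) : ℂ)).re : EReal)

/-- A function `φ` on `G` satisfies Lück's condition if `(φ ⊗ Trₙ)(ln₊|a|) ≥ 0` for every
`n ≥ 1` and every `a ∈ Mₙ(ℤG)` (an `a ∈ Mₙ(ℂG)` whose coefficients are all integers),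
where the quantity is computed in any GNS representation of `φ`. -/
def SatisfiesLueck {G : Type*} [Group G] (φ : G → ℂ) : Prop :=
  ∀ (n : ℕ), 0 < n → ∀ a : Matrix (Fin n) (Fin n) (MonoidAlgebra ℂ G),
    (∀ (i j : Fin n) (g : G), ∃ m : ℤ, (a i j).coeff g = (m : ℂ)) →
    ∀ R : GNSRep G φ, 0 ≤ R.lnPlusQ a

/-- `dim_φ(ker a) := inf { Σᵢ ⟨ξᵢ, h(|π(a)|) ξᵢ⟩ : h : [0,∞) → [0,1] continuous, h 0 = 1 }`,
the von Neumann dimension of the kernel of `a`, computed in the GNS representation `R`. -/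
def GNSRep.kerDim {G : Type*} [Group G] {φ : G → ℂ} (R : GNSRep G φ) {n : ℕ}
    (a : Matrix (Fin n) (Fin n) (MonoidAlgebra ℂ G)) : ℝ :=
  sInf {r : ℝ | ∃ h : ℝ → ℝ, ContinuousOn h (Set.Ici 0) ∧
    (∀ t ∈ Set.Ici (0:ℝ), h t ∈ Set.Icc (0:ℝ) 1) ∧ h 0 = 1 ∧
    r = (∑ i, (inner ℂ (R.vec i) (cfc h (cfcAbs (matAct R.π a)) (R.vec i)) : ℂ)).re}

/-- `τ_k(σ) = card {x | σ x = x} / k`, the fixed-point ratio of a permutation. -/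
def permFixRatio {k : ℕ} (σ : Equiv.Perm (Fin k)) : ℝ :=
  (Finset.univ.filter fun x => σ x = x).card / k

/-- `δ_k(σ₁, σ₂) = card {x | σ₁ x ≠ σ₂ x} / k`, the normalized Hamming distance. -/
def permHamming {k : ℕ} (σ₁ σ₂ : Equiv.Perm (Fin k)) : ℝ :=
  (Finset.univ.filter fun x => σ₁ x ≠ σ₂ x).card / k

/-- A permutational trace on `G`: a function of the form `g ↦ τ_k(π g)` for some `k ≥ 1`
and some group homomorphism `π : G → S_k`. -/
def IsPermutationalTrace {G : Type*} [Group G] (ψ : G → ℂ) : Prop :=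
  ∃ (k : ℕ) (_ : 0 < k) (π : G →* Equiv.Perm (Fin k)),
    ψ = fun g => (permFixRatio (π g) : ℂ)

/-- Apply a field embedding `j : ℚ̄ → ℂ` coefficientwise to a matrix over the group ring
`ℚ̄G`, where `ℚ̄ = AlgebraicClosure ℚ` is the field of algebraic numbers. -/
def mapCoeffs {n : ℕ} {G : Type*} [Group G] (j : AlgebraicClosure ℚ →+* ℂ)
    (a : Matrix (Fin n) (Fin n) (MonoidAlgebra (AlgebraicClosure ℚ) G)) :
    Matrix (Fin n) (Fin n) (MonoidAlgebra ℂ G) :=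
  fun i i' => MonoidAlgebra.ofCoeff (Finsupp.mapRange j j.map_zero (a i i').coeff)

/-- The `kn × kn` matrix over `ℚ̄` obtained from `a ∈ Mₙ(ℚ̄ F_∞)` by applying `q` and the
permutation-matrix representation `α_k` to each entry. -/
def permMatRepOf {k n : ℕ} (q : FreeGroup ℕ →* Equiv.Perm (Fin k))
    (a : Matrix (Fin n) (Fin n) (MonoidAlgebra (AlgebraicClosure ℚ) (FreeGroup ℕ))) :
    Matrix (Fin n × Fin k) (Fin n × Fin k) (AlgebraicClosure ℚ) :=
  Matrix.of fun p r => (a p.1 r.1).coeff.sum fun g c => if q g r.2 = p.2 then c else 0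

/-!
Let `A ∈ M_{kn}(ℂ)` be the image of `j(a)` under the permutation representation. Since `k τ_q` is
the character of that representation, any group ring element it kills also acts as zero in the GNS
representation. Hence `π(j(a))* π(j(a))` satisfies every polynomial equation satisfied by `AᴴA`; its
spectrum is therefore finite, each `h(|π(j(a))|)` is a polynomial in it, and
`k Σᵢ ⟨ξᵢ, h(|π(j(a))|) ξᵢ⟩ = tr h(|A|) = Σ h(s)`, the sum running over the singular values `s` of
`A`. The infimum over `h` is attained by a bump function at `0` and counts the vanishing singular
values, that is `dim ker A`. This number is insensitive to `j` because rank is invariant under field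
extensions.
-/

section LinearAlgebra

variable {m : Type*} [Fintype m]

theorem rank_mul_diagonal_mul [DecidableEq m] {K : Type*} [Field K] [DecidableEq K]
    {U V : Matrix m m K} (hU : IsUnit U.det) (hV : IsUnit V.det) (D : m → K) :
    (U * diagonal D * V).rank = Fintype.card {i // D i ≠ 0} := by
  rw [rank_mul_eq_left_of_isUnit_det _ _ hV, rank_mul_eq_right_of_isUnit_det _ _ hU, rank_diagonal]

theorem rank_map_ringHom {K L : Type*} [Field K] [Field L] (j : K →+* L) (A : Matrix m m K) :
    (A.map j).rank = A.rank := by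
  classical
  obtain ⟨P, Q, D, hA⟩ := Pivot.exists_list_transvec_mul_diagonal_mul_list_transvec A
  have isUnit_det (T : List (TransvectionStruct m K)) :
      IsUnit (T.map TransvectionStruct.toMatrix).prod.det := by
    simp [TransvectionStruct.det_toMatrix_prod]
  have isUnit_det_map {M : Matrix m m K} (hM : IsUnit M.det) : IsUnit (M.map j).det := by
    simpa only [RingHom.map_det] using! hM.map j
  rw [hA, rank_mul_diagonal_mul (isUnit_det P) (isUnit_det Q), Matrix.map_mul, Matrix.map_mul,
    diagonal_map (map_zero j), rank_mul_diagonal_mul (isUnit_det_map (isUnit_det P))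
      (isUnit_det_map (isUnit_det Q))]
  simp only [ne_eq, map_eq_zero]

variable [DecidableEq m]

theorem rank_add_finrank_ker_toLin' {K : Type*} [Field K] (A : Matrix m m K) :
    A.rank + Module.finrank K (LinearMap.ker (toLin' A)) = Fintype.card m := by
  rw [← Module.finrank_fintype_fun_eq_card K]
  exact LinearMap.finrank_range_add_finrank_ker (toLin' A)

theorem finrank_ker_toLin'_map {K L : Type*} [Field K] [Field L] (j : K →+* L)
    (A : Matrix m m K) :
    Module.finrank L (LinearMap.ker (toLin' (A.map j))) =
      Module.finrank K (LinearMap.ker (toLin' A)) := by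
  have hA := rank_add_finrank_ker_toLin' A
  have hAj := rank_add_finrank_ker_toLin' (A.map j)
  rw [rank_map_ringHom] at hAj
  lia

theorem card_eigenvalues_eq_zero {A : Matrix m m ℂ} (hA : (Aᴴ * A).IsHermitian) :
    Finset.card {i | hA.eigenvalues i = 0} = Module.finrank ℂ (LinearMap.ker (toLin' A)) := by
  have card_add := Finset.card_filter_add_card_filter_not (s := Finset.univ)
    fun i => hA.eigenvalues i = 0
  have rank_add := rank_add_finrank_ker_toLin' A
  rw [← rank_conjTranspose_mul_self, hA.rank_eq_card_non_zero_eigs, Fintype.card_subtype]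
    at rank_add
  rw [Finset.card_univ] at card_add
  lia

theorem trace_cfc {N : Matrix m m ℂ} (hN : N.IsHermitian) (f : ℝ → ℝ) :
    (cfc f N).trace = ((∑ i, f (hN.eigenvalues i) : ℝ) : ℂ) := by
  rw [hN.cfc_eq, IsHermitian.cfc, Unitary.conjStarAlgAut_apply, trace_mul_comm, ← mul_assoc]
  simp [trace]

end LinearAlgebra

section FunctionalCalculus

variable {B C : Type*} [Ring B] [StarRing B] [TopologicalSpace B] [Algebra ℝ B]
  [ContinuousFunctionalCalculus ℝ B IsSelfAdjoint] [Ring C] [Algebra ℝ C]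
  {A : Type*} [Ring A] [Algebra ℝ A] (ρ : A →ₐ[ℝ] B) (π : A →ₐ[ℝ] C) {b : A}

theorem spectrum_subset_of_ker_le (hker : ∀ x, ρ x = 0 → π x = 0) (hb : IsSelfAdjoint (ρ b))
    (hfin : (spectrum ℝ (ρ b)).Finite) : spectrum ℝ (π b) ⊆ spectrum ℝ (ρ b) := by
  let p : Polynomial ℝ := ∏ t ∈ hfin.toFinset, (Polynomial.X - Polynomial.C t)
  have eval_p (t : ℝ) : p.eval t = 0 ↔ t ∈ spectrum ℝ (ρ b) := by
    simp [p, Polynomial.eval_prod, Finset.prod_eq_zero_iff, sub_eq_zero]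
  have hρ : ρ (Polynomial.aeval b p) = 0 := by
    rw [← Polynomial.aeval_algHom_apply, ← cfc_polynomial p (ρ b),
      cfc_congr fun t ht => (eval_p t).2 ht, cfc_const_zero]
  intro t ht
  have hπ : p.eval t ∈ spectrum ℝ (0 : C) := by
    rw [← hker _ hρ, ← Polynomial.aeval_algHom_apply]
    exact spectrum.subset_polynomial_aeval (π b) p ⟨t, ht, rfl⟩
  rw [← eval_p]
  by_contra hne
  rw [spectrum.mem_iff, sub_zero] at hπ
  exact hπ ((IsUnit.mk0 _ hne).map (algebraMap ℝ C))

theorem exists_map_eq_cfc [StarRing C] [TopologicalSpace C]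
    [ContinuousFunctionalCalculus ℝ C IsSelfAdjoint] (hker : ∀ x, ρ x = 0 → π x = 0)
    (hρb : IsSelfAdjoint (ρ b)) (hπb : IsSelfAdjoint (π b)) (hfin : (spectrum ℝ (ρ b)).Finite)
    (f : ℝ → ℝ) : ∃ y, ρ y = cfc f (ρ b) ∧ π y = cfc f (π b) := by
  let p : Polynomial ℝ := Lagrange.interpolate hfin.toFinset id f
  have eval_p : (spectrum ℝ (ρ b)).EqOn p.eval f := fun t ht =>
    Lagrange.eval_interpolate_at_node f Function.injective_id.injOn (hfin.mem_toFinset.2 ht)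
  refine ⟨Polynomial.aeval b p, ?_, ?_⟩
  · rw [← Polynomial.aeval_algHom_apply, ← cfc_polynomial p (ρ b), cfc_congr eval_p]
  · rw [← Polynomial.aeval_algHom_apply, ← cfc_polynomial p (π b),
      cfc_congr (eval_p.mono (spectrum_subset_of_ker_le ρ π hker hρb hfin))]

theorem cfc_cfcAbs {D : Type*} [CStarAlgebra D] {x : D}
    (hfin : (spectrum ℝ (star x * x)).Finite) (h : ℝ → ℝ) :
    cfc h (cfcAbs x) = cfc (h ∘ Real.sqrt) (star x * x) :=
  (cfc_comp h Real.sqrt (star x * x) (IsSelfAdjoint.star_mul_self x)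
    ((hfin.image _).continuousOn h)).symm

end FunctionalCalculus

section KernelCutoffs

/-- The test functions `h : [0,∞) → [0,1]` in the infimum defining `GNSRep.kerDim`; they are total
functions on `ℝ` constrained only on `[0,∞)`. -/
def kernelCutoffs : Set (ℝ → ℝ) :=
  {h | ContinuousOn h (Set.Ici 0) ∧ (∀ t ∈ Set.Ici (0 : ℝ), h t ∈ Set.Icc (0 : ℝ) 1) ∧ h 0 = 1}

theorem kerDim_eq_sInf_image {G : Type*} [Group G] {φ : G → ℂ} (R : GNSRep G φ) {n : ℕ}
    (a : Matrix (Fin n) (Fin n) (MonoidAlgebra ℂ G)) :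
    R.kerDim a = sInf ((fun h : ℝ → ℝ =>
      (∑ i, inner ℂ (R.vec i) (cfc h (cfcAbs (matAct R.π a)) (R.vec i))).re) '' kernelCutoffs) := by
  simp only [GNSRep.kerDim, kernelCutoffs, Set.image, Set.mem_ofPred_eq, and_assoc, eq_comm]

theorem isLeast_sum_kernelCutoffs {ι : Type*} [Fintype ι] {s : ι → ℝ} (hs : ∀ i, 0 ≤ s i) :
    IsLeast ((fun h : ℝ → ℝ => ∑ i, h (s i)) '' kernelCutoffs)
      (Finset.card {i | s i = 0} : ℝ) := by
  rw [Finset.natCast_card_filter]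
  constructor
  · obtain ⟨h, h_zero, h_one, h_mem⟩ := exists_continuous_zero_one_of_isClosed
      ((Set.finite_range s).sdiff (t := {0})).isClosed isClosed_singleton Set.disjoint_sdiff_left
    refine ⟨h, ⟨h.continuous.continuousOn, fun t _ => h_mem t, h_one rfl⟩, ?_⟩
    refine Finset.sum_congr rfl fun i _ => ?_
    split_ifs with hi
    · exact h_one hi
    · exact h_zero ⟨⟨i, rfl⟩, hi⟩
  · rintro _ ⟨h, ⟨-, h_mem, h_one⟩, rfl⟩
    refine Finset.sum_le_sum fun i _ => ?_
    split_ifs with hi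
    · rw [hi, h_one]
    · exact (h_mem _ (hs i)).1

end KernelCutoffs

section MatrixAmplification

variable {A : Type*} [Ring A] {n : ℕ}

/-- The amplification `M_ι(A) → M_{ι × m}(K)` of a matrix representation `ρ : A → M_m(K)`, applying
`ρ` to each entry. -/
def amplify {K : Type*} [CommRing K] [Algebra K A] {ι m : Type*} [Fintype ι] [DecidableEq ι]
    [Fintype m] [DecidableEq m] (ρ : A →ₐ[K] Matrix m m K) :
    Matrix ι ι A →ₐ[K] Matrix (ι × m) (ι × m) K :=
  (compAlgEquiv ι m K K).toAlgHom.comp ρ.mapMatrix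

theorem amplify_apply {K : Type*} [CommRing K] [Algebra K A] {ι m : Type*} [Fintype ι]
    [DecidableEq ι] [Fintype m] [DecidableEq m] (ρ : A →ₐ[K] Matrix m m K) (a : Matrix ι ι A)
    (p r : ι × m) : amplify ρ a p r = ρ (a p.1 r.1) p.2 r.2 :=
  rfl

variable [Algebra ℂ A] {H : Type*} [NormedAddCommGroup H] [InnerProductSpace ℂ H]
  (π : A →ₐ[ℂ] (H →L[ℂ] H))

theorem matAct_apply (a : Matrix (Fin n) (Fin n) A) (v : PiLp 2 fun _ : Fin n => H) (i : Fin n) :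
    matAct π a v i = ∑ l, π (a i l) (v l) := by
  simp [matAct]

/-- `matAct` as an algebra homomorphism. -/
def matActHom (n : ℕ) : Matrix (Fin n) (Fin n) A →ₐ[ℂ]
    (PiLp 2 (fun _ : Fin n => H) →L[ℂ] PiLp 2 (fun _ : Fin n => H)) :=
  AlgHom.ofLinearMap
    { toFun := matAct π
      map_add' := fun a b => by ext v i; simp [matAct_apply, Finset.sum_add_distrib]
      map_smul' := fun c a => by ext v i; simp [matAct_apply, Finset.smul_sum] }
    (by
      ext v i
      have off_diag (l : Fin n) (hl : l ≠ i) :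
          π ((1 : Matrix (Fin n) (Fin n) A) i l) (v l) = 0 := by
        simp [one_apply_ne hl.symm]
      simp [matAct_apply, Fintype.sum_eq_single i off_diag])
    (fun a b => by
      ext v i
      simp only [LinearMap.coe_mk, AddHom.coe_mk, matAct_apply, mul_apply_eq_comp,
        mul_apply, map_sum, map_mul, _root_.sum_apply]
      exact Finset.sum_comm)

theorem matAct_eq_star [CompleteSpace H] {a b : Matrix (Fin n) (Fin n) A}
    (hab : ∀ i l, π (b i l) = star (π (a l i))) : matAct π b = star (matAct π a) := by
  rw [ContinuousLinearMap.star_eq_adjoint, ContinuousLinearMap.eq_adjoint_iff]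
  intro v w
  simp only [PiLp.inner_apply, matAct_apply, hab, inner_sum, sum_inner,
    ContinuousLinearMap.star_eq_adjoint, ContinuousLinearMap.adjoint_inner_left]
  exact Finset.sum_comm

theorem matAct_eq_zero_of_amplify_eq_zero {m : Type*} [Fintype m] [DecidableEq m]
    {ρ : A →ₐ[ℂ] Matrix m m ℂ} (hker : ∀ x, ρ x = 0 → π x = 0) {a : Matrix (Fin n) (Fin n) A}
    (ha : amplify ρ a = 0) : matAct π a = 0 := by
  have entry_eq_zero (i l : Fin n) : π (a i l) = 0 :=
    hker _ <| Matrix.ext fun p r => congrFun₂ ha (i, p) (l, r)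
  ext v i
  simp [matAct_apply, entry_eq_zero]

end MatrixAmplification

section GroupAlgebra

variable {G : Type*} [Group G]

/-- The conjugate-linear involution `∑ c_g g ↦ ∑ c̄_g g⁻¹` of the complex group algebra. -/
def groupAlgebraStar (x : MonoidAlgebra ℂ G) : MonoidAlgebra ℂ G :=
  (MonoidAlgebra.map (starRingEnd ℂ) x).mapDomain (·⁻¹)

theorem map_groupAlgebraStar {B : Type*} [Ring B] [StarRing B] [Algebra ℂ B] [StarModule ℂ B]
    (f : MonoidAlgebra ℂ G →ₐ[ℂ] B)
    (hf : ∀ g, star (f (MonoidAlgebra.of ℂ G g)) = f (MonoidAlgebra.of ℂ G g⁻¹))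
    (x : MonoidAlgebra ℂ G) : f (groupAlgebraStar x) = star (f x) := by
  induction x using MonoidAlgebra.induction_linear with
  | zero => simp [groupAlgebraStar]
  | add x y hx hy =>
    rw [map_add, star_add, ← hx, ← hy, ← map_add]
    simp [groupAlgebraStar, MonoidAlgebra.map_add, MonoidAlgebra.mapDomain_add]
  | single g c =>
    have single_eq_smul (g : G) (c : ℂ) :
        MonoidAlgebra.single g c = c • MonoidAlgebra.of ℂ G g := by simp
    rw [groupAlgebraStar, MonoidAlgebra.map_single, MonoidAlgebra.mapDomain_single,
      single_eq_smul, single_eq_smul, map_smul, map_smul, star_smul, hf]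
    rfl

/-- `ρ` is a finite-dimensional `*`-representation of `ℂG` with character `d φ`. -/
structure IsMatrixModel {m : Type*} [Fintype m] [DecidableEq m] (φ : G → ℂ) (d : ℝ)
    (ρ : MonoidAlgebra ℂ G →ₐ[ℂ] Matrix m m ℂ) : Prop where
  star_of : ∀ g, star (ρ (MonoidAlgebra.of ℂ G g)) = ρ (MonoidAlgebra.of ℂ G g⁻¹)
  trace_of : ∀ g, (ρ (MonoidAlgebra.of ℂ G g)).trace = d * φ g

end GroupAlgebra

namespace IsMatrixModel

variable {G : Type*} [Group G] {φ : G → ℂ} {d : ℝ} {m : Type*} [Fintype m] [DecidableEq m]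
  {ρ : MonoidAlgebra ℂ G →ₐ[ℂ] Matrix m m ℂ} {n : ℕ}

theorem trace_eq_mul_inner (hρ : IsMatrixModel φ d ρ) (R : GNSRep G φ)
    (x : MonoidAlgebra ℂ G) : (ρ x).trace = d * inner ℂ R.ξ (R.π x R.ξ) := by
  induction x using MonoidAlgebra.induction_on with
  | of g => rw [hρ.trace_of, R.inner_eq]
  | add x y hx hy => simp [hx, hy, mul_add]
  | smul c x hx => simp [hx, mul_left_comm]

theorem π_eq_zero_of_eq_zero (hρ : IsMatrixModel φ d ρ) (R : GNSRep G φ) (hd : d ≠ 0)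
    {x : MonoidAlgebra ℂ G} (hx : ρ x = 0) : R.π x = 0 := by
  have inner_eq_zero (y z : MonoidAlgebra ℂ G) :
      inner ℂ (R.π y R.ξ) (R.π x (R.π z R.ξ)) = 0 := by
    have h := hρ.trace_eq_mul_inner R (groupAlgebraStar y * (x * z))
    simpa [hx, hd, map_groupAlgebraStar R.π R.star_of, ContinuousLinearMap.star_eq_adjoint,
      ContinuousLinearMap.adjoint_inner_right] using h
  refine ContinuousLinearMap.ext_on (R.cyclic.mono Submodule.subset_span) ?_
  rintro _ ⟨z, rfl⟩
  refine R.cyclic.eq_zero_of_inner_right (𝕜 := ℂ) ?_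
  rintro _ ⟨y, rfl⟩
  exact inner_eq_zero y z

theorem trace_amplify (hρ : IsMatrixModel φ d ρ) (R : GNSRep G φ)
    (a : Matrix (Fin n) (Fin n) (MonoidAlgebra ℂ G)) :
    (amplify ρ a).trace = d * ∑ i, inner ℂ (R.vec i) (matAct R.π a (R.vec i)) := by
  have inner_vec (i : Fin n) : inner ℂ (R.vec i) (matAct R.π a (R.vec i)) =
      inner ℂ R.ξ (R.π (a i i) R.ξ) := by
    have vec_of_ne (l : Fin n) (hl : l ≠ i) : R.vec i l = 0 := by simp [GNSRep.vec, hl]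
    have vec_self : R.vec i i = R.ξ := by simp [GNSRep.vec]
    rw [PiLp.inner_apply,
      Fintype.sum_eq_single i fun l hl => by rw [vec_of_ne l hl, inner_zero_left], matAct_apply,
      Fintype.sum_eq_single i fun l hl => by rw [vec_of_ne l hl, map_zero], vec_self]
  simp only [inner_vec, Finset.mul_sum, ← hρ.trace_eq_mul_inner R]
  simp only [trace, diag, amplify_apply, Fintype.sum_prod_type]

theorem amplify_map_groupAlgebraStar {ι : Type*} [Fintype ι] [DecidableEq ι]
    (hρ : IsMatrixModel φ d ρ) (a : Matrix ι ι (MonoidAlgebra ℂ G)) :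
    amplify ρ (aᵀ.map groupAlgebraStar) = (amplify ρ a)ᴴ := by
  ext p r
  simp only [amplify_apply, map_apply, transpose_apply, conjTranspose_apply,
    map_groupAlgebraStar ρ hρ.star_of, star_apply]

theorem exists_amplify_eq_cfc (hρ : IsMatrixModel φ d ρ) (R : GNSRep G φ) (hd : d ≠ 0)
    (a : Matrix (Fin n) (Fin n) (MonoidAlgebra ℂ G)) (h : ℝ → ℝ) :
    ∃ y, amplify ρ y = cfc (h ∘ Real.sqrt) ((amplify ρ a)ᴴ * amplify ρ a) ∧
      matAct R.π y = cfc h (cfcAbs (matAct R.π a)) := by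
  let x := aᵀ.map groupAlgebraStar * a
  let P := (amplify (ι := Fin n) ρ).restrictScalars ℝ
  let Q := (matActHom R.π n).restrictScalars ℝ
  have hP : P x = (amplify ρ a)ᴴ * amplify ρ a :=
    (map_mul (amplify ρ) _ a).trans (by rw [hρ.amplify_map_groupAlgebraStar])
  have hQ : Q x = star (matAct R.π a) * matAct R.π a :=
    (map_mul (matActHom R.π n) _ a).trans <| congrArg (· * _) <|
      matAct_eq_star R.π fun i l => map_groupAlgebraStar R.π R.star_of (a l i)
  have hker (y) (hy : P y = 0) : Q y = 0 :=
    matAct_eq_zero_of_amplify_eq_zero R.π (fun _ => hρ.π_eq_zero_of_eq_zero R hd) hy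
  have hPsa : IsSelfAdjoint (P x) := hP ▸ isHermitian_conjTranspose_mul_self _
  have hQsa : IsSelfAdjoint (Q x) := hQ ▸ IsSelfAdjoint.star_mul_self _
  have hfin : (spectrum ℝ (P x)).Finite := finite_real_spectrum
  have hQfin : (spectrum ℝ (Q x)).Finite :=
    hfin.subset (spectrum_subset_of_ker_le P Q hker hPsa hfin)
  rw [← hP, cfc_cfcAbs (hQ ▸ hQfin), ← hQ]
  exact exists_map_eq_cfc P Q hker hPsa hQsa hfin (h ∘ Real.sqrt)

theorem mul_sum_inner_cfc_eq (hρ : IsMatrixModel φ d ρ) (R : GNSRep G φ) (hd : d ≠ 0)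
    (a : Matrix (Fin n) (Fin n) (MonoidAlgebra ℂ G)) (h : ℝ → ℝ) :
    d * (∑ i, inner ℂ (R.vec i) (cfc h (cfcAbs (matAct R.π a)) (R.vec i))).re =
      ∑ i, h √((isHermitian_conjTranspose_mul_self (amplify ρ a)).eigenvalues i) := by
  obtain ⟨y, hρy, hπy⟩ := hρ.exists_amplify_eq_cfc R hd a h
  rw [← hπy, ← Complex.re_ofReal_mul, ← hρ.trace_amplify R, hρy,
    trace_cfc (isHermitian_conjTranspose_mul_self _), Complex.ofReal_re]
  rfl

theorem kerDim_eq (hρ : IsMatrixModel φ d ρ) (R : GNSRep G φ) (hd : 0 < d)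
    (a : Matrix (Fin n) (Fin n) (MonoidAlgebra ℂ G)) :
    R.kerDim a = Module.finrank ℂ (LinearMap.ker (toLin' (amplify ρ a))) / d := by
  let A := amplify ρ a
  let s i := √((isHermitian_conjTranspose_mul_self A).eigenvalues i)
  have card_zero : Finset.card {i | s i = 0} =
      Module.finrank ℂ (LinearMap.ker (toLin' A)) := by
    rw [← card_eigenvalues_eq_zero (isHermitian_conjTranspose_mul_self A)]
    simp only [s, Real.sqrt_eq_zero ((posSemidef_conjTranspose_mul_self A).eigenvalues_nonneg _)]
  have sum_inner_eq (h : ℝ → ℝ) :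
      (∑ i, inner ℂ (R.vec i) (cfc h (cfcAbs (matAct R.π a)) (R.vec i))).re =
        (∑ i, h (s i)) / d := by
    rw [eq_div_iff hd.ne', mul_comm, hρ.mul_sum_inner_cfc_eq R hd.ne']
  have s_nonneg i : 0 ≤ s i := Real.sqrt_nonneg _
  have div_mono : Monotone (· / d) := fun _ _ h => div_le_div_of_nonneg_right h hd.le
  simp only [kerDim_eq_sInf_image, sum_inner_eq]
  rw [← Set.image_image (· / d), ← card_zero]
  exact (div_mono.map_isLeast (isLeast_sum_kernelCutoffs s_nonneg)).csInf_eq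

end IsMatrixModel

section PermutationRepresentation

variable {G : Type*} [Group G] {k n : ℕ} (q : G →* Equiv.Perm (Fin k))

/-- The linear extension `α_k ∘ q : KG → M_k(K)` of a permutation representation `q : G → S_k`. -/
def permRep (K : Type*) [CommRing K] : MonoidAlgebra K G →ₐ[K] Matrix (Fin k) (Fin k) K :=
  MonoidAlgebra.lift K _ G (permMatrixHom.comp q)

theorem permRep_apply {K : Type*} [CommRing K] (x : MonoidAlgebra K G) (p r : Fin k) :
    permRep q K x p r = x.coeff.sum fun g c => if q g r = p then c else 0 := by
  simp only [permRep, MonoidAlgebra.lift_apply, Finsupp.sum, Matrix.sum_apply]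
  refine Finset.sum_congr rfl fun g _ => ?_
  simp [Equiv.Perm.permMatrix, PEquiv.toMatrix_apply, Equiv.symm_apply_eq, eq_comm (a := p)]

theorem permRep_of {K : Type*} [CommRing K] (g : G) :
    permRep q K (MonoidAlgebra.of K G g) = (q g)⁻¹.permMatrix K := by
  rw [permRep, MonoidAlgebra.lift_of]
  rfl

theorem isMatrixModel_permRep (hk : 0 < k) :
    IsMatrixModel (fun g => (permFixRatio (q g) : ℂ)) k (permRep q ℂ) where
  star_of g := by
    rw [permRep_of, permRep_of, star_eq_conjTranspose, conjTranspose_permMatrix, map_inv]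
  trace_of g := by
    have trace_eq : (permRep q ℂ (MonoidAlgebra.of ℂ G g)).trace =
        Finset.card {x | q g x = x} := by
      simp [trace, permRep_apply]
    rw [trace_eq, permFixRatio]
    push_cast
    exact (mul_div_cancel₀ _ (Nat.cast_ne_zero.2 hk.ne')).symm

theorem amplify_permRep_map {K L ι : Type*} [CommRing K] [CommRing L] [Fintype ι] [DecidableEq ι]
    (j : K →+* L) (a : Matrix ι ι (MonoidAlgebra K G)) :
    amplify (permRep q L) (a.map (MonoidAlgebra.map j)) = (amplify (permRep q K) a).map j := by
  ext p r
  simp only [map_apply, amplify_apply, permRep_apply, map_finsuppSum, apply_ite j, map_zero]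
  exact Finsupp.sum_mapRange_index (hf := map_zero j) fun _ => ite_self 0

theorem stmt19_general {K : Type*} [Field K] (hk : 0 < k) (j : K →+* ℂ)
    (R : GNSRep G (fun g => (permFixRatio (q g) : ℂ)))
    (a : Matrix (Fin n) (Fin n) (MonoidAlgebra K G)) :
    R.kerDim (a.map (MonoidAlgebra.map j)) =
      Module.finrank K (LinearMap.ker (toLin' (amplify (permRep q K) a))) / k := by
  rw [(isMatrixModel_permRep q hk).kerDim_eq R (mod_cast hk), amplify_permRep_map,
    finrank_ker_toLin'_map]

theorem permMatRepOf_eq_amplify (q : FreeGroup ℕ →* Equiv.Perm (Fin k))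
    (a : Matrix (Fin n) (Fin n) (MonoidAlgebra (AlgebraicClosure ℚ) (FreeGroup ℕ))) :
    permMatRepOf q a = amplify (permRep q (AlgebraicClosure ℚ)) a := by
  ext p r
  rw [amplify_apply, permRep_apply]
  rfl

end PermutationRepresentation

/-- for a homomorphism `q : F_∞ → S_k`, the associated permutational trace
`τ_q` and `a ∈ Mₙ(ℚ̄ F_∞)`, for every field embedding `j : ℚ̄ → ℂ` one has
`dim_{τ_q}(ker j(a)) = (1/k)·dim_ℚ̄ ker((α_k ∘ q)(a))`; in particular this dimension does
not depend on `j`. -/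
theorem stmt19 (k n : ℕ) (hk : 0 < k) (hn : 0 < n)
    (q : FreeGroup ℕ →* Equiv.Perm (Fin k))
    (a : Matrix (Fin n) (Fin n) (MonoidAlgebra (AlgebraicClosure ℚ) (FreeGroup ℕ))) :
    (∀ (j : AlgebraicClosure ℚ →+* ℂ)
      (R : GNSRep (FreeGroup ℕ) (fun g => (permFixRatio (q g) : ℂ))),
        R.kerDim (mapCoeffs j a) =
          (Module.finrank (AlgebraicClosure ℚ)
            (LinearMap.ker (Matrix.toLin' (permMatRepOf q a))) : ℝ) / k) ∧
    (∀ (j₁ j₂ : AlgebraicClosure ℚ →+* ℂ)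
      (R : GNSRep (FreeGroup ℕ) (fun g => (permFixRatio (q g) : ℂ))),
        R.kerDim (mapCoeffs j₁ a) = R.kerDim (mapCoeffs j₂ a)) :=
  ⟨fun j R => permMatRepOf_eq_amplify q a ▸ stmt19_general q hk j R a,
    fun j₁ j₂ R => (stmt19_general q hk j₁ R a).trans (stmt19_general q hk j₂ R a).symm⟩

end
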